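/- Let N be a positive integer, let s₁, …, s_N ∈ ℂ, let t₁ ∈ ℝ and Δt ∈ ℝ, and set t_j = t₁ + (j−1)·Δt for j = 1, …, N. Define the N×N matrices Λ and Λ' by Λ_{ij} = e^{s_i t_j} and Λ'_{ij} = e^{s_i (t_j + Δt)}. Let Ψ be an invertible N×N complex matrix with columns ψ₁, …, ψ_N, assume Λ is invertible, and set X = Ψ·Λ and X̃ = Ψ·Λ'. Then for each i = 1, …, N, the matrix X̃·X⁻¹ satisfies (X̃·X⁻¹)·ψ_i = e^{s_i Δt}·ψ_i; that is, the columns of Ψ are eigenvectors of X̃·X⁻¹ with eigenvalues μ_i = e^{s_i Δt}. -/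

import Mathlib

open Matrix

/-- Ibrahim time-domain eigenvalue problem: with sampling times `t_j = t₁ + (j-1)Δt`,
`Λ_{ij} = e^{s_i t_j}`, `Λ'_{ij} = e^{s_i (t_j + Δt)}`, `Ψ` invertible with columns `ψ_i`,
`Λ` invertible, `X = Ψ Λ` and `X̃ = Ψ Λ'`, each column `ψ_i` of `Ψ` is an eigenvector of
`X̃ X⁻¹` with eigenvalue `μ_i = e^{s_i Δt}`. -/
theorem stmt_11 (N : ℕ) (hN : 0 < N) (s : Fin N → ℂ) (t₁ Δt : ℝ)
    (t : Fin N → ℝ) (ht : ∀ j : Fin N, t j = t₁ + (j : ℕ) * Δt)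
    (Λ Λ' : Matrix (Fin N) (Fin N) ℂ)
    (hΛdef : ∀ i j : Fin N, Λ i j = Complex.exp (s i * (t j : ℂ)))
    (hΛ'def : ∀ i j : Fin N, Λ' i j = Complex.exp (s i * ((t j + Δt : ℝ) : ℂ)))
    (Ψ : Matrix (Fin N) (Fin N) ℂ) (hΨ : IsUnit Ψ.det) (hΛ : IsUnit Λ.det)
    (X X' : Matrix (Fin N) (Fin N) ℂ) (hX : X = Ψ * Λ) (hX' : X' = Ψ * Λ') :
    ∀ i : Fin N,
      (X' * X⁻¹).mulVec (fun j => Ψ j i) =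
        Complex.exp (s i * (Δt : ℂ)) • (fun j => Ψ j i) := by
  -- Shifting time by `Δt` scales row `i` of `Λ` by `e^{s_i Δt}`, so `Λ' = D Λ` with `D` diagonal
  -- and `X' X⁻¹ = Ψ D Ψ⁻¹`.
  have hD : Λ' = diagonal (fun i => Complex.exp (s i * (Δt : ℂ))) * Λ := by
    ext i j
    rw [diagonal_mul, hΛdef, hΛ'def, ← Complex.exp_add]
    congr 1
    push_cast
    ring
  have key : X' * X⁻¹ * Ψ = Ψ * diagonal (fun i => Complex.exp (s i * (Δt : ℂ))) := by
    rw [hX, hX', hD, Matrix.mul_inv_rev, ← Matrix.mul_assoc Ψ, ← Matrix.mul_assoc,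
      mul_nonsing_inv_cancel_right _ _ hΛ, nonsing_inv_mul_cancel_right _ _ hΨ]
  intro i
  ext k
  have h := congrFun (congrFun key k) i
  rw [mul_diagonal, mul_comm (Ψ k i)] at h
  exact h
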